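/- arXiv:2002.06376 — 3 statements merged into one kernel-verified Lean document; each statement's English description precedes it below -/
import Mathlib

section
/- Let Q > 1 be an integer, ζ_Q = exp(2πi/Q), and let π, σ be permutations of ℤ/Qℤ. For integers a, b, u, b̂, û with (b mod Q, u mod Q) ≠ (b̂ mod Q, û mod Q), the Hermitian inner product of F_{a,b,u} and F_{a,b̂,û} is zero, i.e., ∑_{(i,j) ∈ (ℤ/Qℤ)²} (1/Q²)·ζ_Q^{j(aπ(i)+b)+uσ(i)} · conj(ζ_Q^{j(aπ(i)+b̂)+ûσ(i)}) = 0. -/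
open ZMod in
/-- Powers of `exp (2πi/N)` are the values of the standard additive character of `ℤ/Nℤ`. -/
lemma exp_two_pi_I_div_pow_val (N : ℕ) [NeZero N] (x : ZMod N) :
    Complex.exp (2 * Real.pi * Complex.I / N) ^ x.val = stdAddChar x := by
  rw [stdAddChar_apply, toCircle_apply, ← Complex.exp_nat_mul]
  congr 1
  ring

open ZMod in
lemma stdAddChar_mul_conj (N : ℕ) [NeZero N] (x y : ZMod N) :
    stdAddChar x * (starRingEnd ℂ) (stdAddChar y) = stdAddChar (x - y) := by
  rw [sub_eq_add_neg, AddChar.map_add_eq_mul, AddChar.map_neg_eq_conj]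

open ZMod in
lemma sum_stdAddChar_mul_eq_zero (N : ℕ) [NeZero N] {c : ZMod N} (hc : c ≠ 0) :
    ∑ x : ZMod N, stdAddChar (x * c) = 0 := by
  rw [AddChar.sum_mulShift c (isPrimitive_stdAddChar N), if_neg hc, Nat.cast_zero]

/-- Let `Q > 1`, `ζ_Q = exp(2πi/Q)`, and `π, σ` permutations of `ℤ/Qℤ`.
For integers `a, b, u, b̂, û` with `(b mod Q, u mod Q) ≠ (b̂ mod Q, û mod Q)`, the
Hermitian inner product of `F_{a,b,u}` and `F_{a,b̂,û}` is zero. -/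
theorem inner_F_eq_zero_same_a (Q : ℕ) [NeZero Q] (hQ : 1 < Q)
    (pe se : Equiv.Perm (ZMod Q)) (a b u b' u' : ℤ)
    (h : ((b : ZMod Q), (u : ZMod Q)) ≠ ((b' : ZMod Q), (u' : ZMod Q))) :
    ∑ k : ZMod Q × ZMod Q,
      (1 / (Q : ℂ) ^ 2) *
        (Complex.exp (2 * Real.pi * Complex.I / Q) ^
          (k.2 * ((a : ZMod Q) * pe k.1 + (b : ZMod Q)) + (u : ZMod Q) * se k.1).val) *
        (starRingEnd ℂ) (Complex.exp (2 * Real.pi * Complex.I / Q) ^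
          (k.2 * ((a : ZMod Q) * pe k.1 + (b' : ZMod Q)) + (u' : ZMod Q) * se k.1).val)
      = 0 := by
  have hterm (k : ZMod Q × ZMod Q) :
      (1 / (Q : ℂ) ^ 2) *
        (Complex.exp (2 * Real.pi * Complex.I / Q) ^
          (k.2 * ((a : ZMod Q) * pe k.1 + (b : ZMod Q)) + (u : ZMod Q) * se k.1).val) *
        (starRingEnd ℂ) (Complex.exp (2 * Real.pi * Complex.I / Q) ^
          (k.2 * ((a : ZMod Q) * pe k.1 + (b' : ZMod Q)) + (u' : ZMod Q) * se k.1).val)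
      = (1 / (Q : ℂ) ^ 2) * (ZMod.stdAddChar (se k.1 * ((u : ZMod Q) - (u' : ZMod Q))) *
          ZMod.stdAddChar (k.2 * ((b : ZMod Q) - (b' : ZMod Q)))) := by
    rw [exp_two_pi_I_div_pow_val, exp_two_pi_I_div_pow_val, mul_assoc, stdAddChar_mul_conj,
      ← AddChar.map_add_eq_mul]
    congr 2
    ring
  rw [Finset.sum_congr rfl fun k _ => hterm k, ← Finset.mul_sum, Fintype.sum_prod_type]
  dsimp only
  rw [← Finset.sum_mul_sum,
    Equiv.sum_comp se fun x => ZMod.stdAddChar (x * ((u : ZMod Q) - (u' : ZMod Q)))]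
  by_cases hb : (b : ZMod Q) = b'
  · have hu : (u : ZMod Q) ≠ u' := fun hu => h (Prod.ext hb hu)
    rw [sum_stdAddChar_mul_eq_zero Q (sub_ne_zero.mpr hu), zero_mul, mul_zero]
  · rw [sum_stdAddChar_mul_eq_zero Q (sub_ne_zero.mpr hb), mul_zero, mul_zero]
end

section
/- For every real ε > 0 there exists M such that for every integer Q > 2 whose smallest prime factor p_min satisfies p_min > M, the ratio of I_max = 1/(Q−1) to the Welch bound I_W = √(p_min·Q/((p_min·Q² + Q² − Q − 1)(Q−1))) satisfies |I_max/I_W − 1| < ε. That is, I_max/I_W tends to 1 as p_min → ∞, so the codebook of Theorem 3 is asymptotically optimal with respect to the Welch bound. -/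
/-- The ratio of the maximal correlation to the Welch bound, with the square root cleared. -/
lemma sq_welch_ratio {p q : ℝ} (hp : 0 < p) (hq : 2 < q) :
    ((1 / (q - 1)) / Real.sqrt (p * q / ((p * q ^ 2 + q ^ 2 - q - 1) * (q - 1)))) ^ 2 =
      1 + (q ^ 2 - q - 1 + p * q) / (p * q * (q - 1)) := by
  have h₁ : 0 < q - 1 := by linarith
  have h₂ : 0 < q := by linarith
  have h₃ : 0 < p * q ^ 2 + q ^ 2 - q - 1 := by
    nlinarith [mul_pos hp (pow_pos h₂ 2)]
  rw [div_pow, Real.sq_sqrt (by positivity)]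
  field_simp
  ring

/-- The ratio of the maximal correlation to the Welch bound is within `3 / p` of `1`. -/
lemma abs_welch_ratio_sub_one_le {p q : ℝ} (hp : 0 < p) (hpq : p ≤ q) (hq : 2 < q) :
    |(1 / (q - 1)) / Real.sqrt (p * q / ((p * q ^ 2 + q ^ 2 - q - 1) * (q - 1))) - 1| ≤
      3 / p := by
  have h₁ : 0 < q - 1 := by linarith
  have h₂ : 0 < q := by linarith
  have hsq := sq_welch_ratio hp hq
  have hr : 0 ≤ (1 / (q - 1)) / Real.sqrt (p * q / ((p * q ^ 2 + q ^ 2 - q - 1) * (q - 1))) := by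
    positivity
  generalize (1 / (q - 1)) / Real.sqrt (p * q / ((p * q ^ 2 + q ^ 2 - q - 1) * (q - 1))) = r at *
  have hlow : 0 ≤ (q ^ 2 - q - 1 + p * q) / (p * q * (q - 1)) :=
    div_nonneg (by nlinarith [mul_pos hp h₂]) (by positivity)
  have hupp : (q ^ 2 - q - 1 + p * q) / (p * q * (q - 1)) ≤ 3 / p := by
    rw [div_le_div_iff₀ (by positivity) hp]
    have : q ^ 2 - q - 1 + p * q ≤ 3 * (q * (q - 1)) := by
      nlinarith [mul_le_mul_of_nonneg_right hpq h₂.le, sq_nonneg (q - 1)]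
    nlinarith [mul_le_mul_of_nonneg_right this hp.le]
  have hone : 1 ≤ r := by nlinarith
  rw [abs_of_nonneg (by linarith)]
  nlinarith

/-- For every `ε > 0` there exists `M` such that for every integer `Q > 2`
whose smallest prime factor `p_min` satisfies `p_min > M`, the ratio of
`I_max = 1/(Q−1)` to the Welch bound `I_W = √(p_min·Q/((p_min·Q² + Q² − Q − 1)(Q−1)))`
satisfies `|I_max/I_W − 1| < ε`; i.e. the codebook of Theorem 3 is asymptotically
optimal with respect to the Welch bound as `p_min → ∞`. -/
theorem asymptotic_welch_second_construction :
    ∀ ε : ℝ, 0 < ε → ∃ M : ℝ, ∀ Q : ℕ, 2 < Q → M < (Q.minFac : ℝ) →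
      |(1 / ((Q : ℝ) - 1)) /
          Real.sqrt ((Q.minFac : ℝ) * (Q : ℝ) /
            (((Q.minFac : ℝ) * (Q : ℝ) ^ 2 + (Q : ℝ) ^ 2 - (Q : ℝ) - 1) * ((Q : ℝ) - 1)))
        - 1| < ε := by
  intro ε hε
  refine ⟨3 / ε, fun Q hQ hM => ?_⟩
  have hp : (0 : ℝ) < Q.minFac := by exact_mod_cast Q.minFac_pos
  have hpq : (Q.minFac : ℝ) ≤ Q := by exact_mod_cast Nat.minFac_le (by lia)
  refine (abs_welch_ratio_sub_one_le hp hpq (by exact_mod_cast hQ)).trans_lt ?_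
  rwa [div_lt_comm₀ hp hε]
end

section
/- Let Q > 2 be an integer, ζ_Q = exp(2πi/Q), let π, σ be permutations of ℤ/Qℤ, and fix ℓ ∈ ℤ/Qℤ. For integers a, b, u, b̂, û with b ≢ b̂ (mod Q), the Hermitian inner product of the punctured vectors G_{a,b,u} and G_{a,b̂,û} is zero. -/
/-- The power `ζ_N ^ z.val` is the value at `z` of the standard additive character. -/
theorem exp_pow_val_eq_stdAddChar (N : ℕ) [NeZero N] (z : ZMod N) :
    Complex.exp (2 * Real.pi * Complex.I / N) ^ z.val = ZMod.stdAddChar z := by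
  rw [ZMod.stdAddChar_apply, ZMod.toCircle_apply, ← Complex.exp_nat_mul]
  congr 1
  ring

/-- Let `Q > 2`, `ζ_Q = exp(2πi/Q)`, `π, σ` permutations of `ℤ/Qℤ`, and
fix `ℓ ∈ ℤ/Qℤ`. For integers `a, b, u, b̂, û` with `b ≢ b̂ (mod Q)`, the Hermitian inner
product of the punctured vectors `G_{a,b,u}` and `G_{a,b̂,û}` is zero. -/
theorem inner_G_eq_zero_of_b_ne (Q : ℕ) [NeZero Q] (hQ : 2 < Q)
    (pe se : Equiv.Perm (ZMod Q)) (ℓ : ZMod Q) (a b u b' u' : ℤ)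
    (h : (b : ZMod Q) ≠ (b' : ZMod Q)) :
    ∑ k : {i : ZMod Q // i ≠ ℓ} × ZMod Q,
      ((1 / (Real.sqrt ((Q : ℝ) * ((Q : ℝ) - 1)) : ℂ)) *
        Complex.exp (2 * Real.pi * Complex.I / Q) ^
          (k.2 * ((a : ZMod Q) * pe k.1.1 + (b : ZMod Q)) + (u : ZMod Q) * se k.1.1).val) *
      (starRingEnd ℂ) ((1 / (Real.sqrt ((Q : ℝ) * ((Q : ℝ) - 1)) : ℂ)) *
        Complex.exp (2 * Real.pi * Complex.I / Q) ^
          (k.2 * ((a : ZMod Q) * pe k.1.1 + (b' : ZMod Q)) + (u' : ZMod Q) * se k.1.1).val)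
      = 0 := by
  rw [Fintype.sum_prod_type]
  refine Finset.sum_eq_zero fun i _ => ?_
  set c : ℂ := 1 / (Real.sqrt ((Q : ℝ) * ((Q : ℝ) - 1)) : ℂ)
  have hterm : ∀ j : ZMod Q,
      (c * Complex.exp (2 * Real.pi * Complex.I / Q) ^
          (j * ((a : ZMod Q) * pe i.1 + (b : ZMod Q)) + (u : ZMod Q) * se i.1).val) *
        (starRingEnd ℂ) (c * Complex.exp (2 * Real.pi * Complex.I / Q) ^
          (j * ((a : ZMod Q) * pe i.1 + (b' : ZMod Q)) + (u' : ZMod Q) * se i.1).val) =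
      c * (starRingEnd ℂ) c * ZMod.stdAddChar (((u : ZMod Q) - (u' : ZMod Q)) * se i.1) *
        ZMod.stdAddChar (j * ((b : ZMod Q) - (b' : ZMod Q))) := by
    intro j
    rw [exp_pow_val_eq_stdAddChar, exp_pow_val_eq_stdAddChar, map_mul,
      ← AddChar.map_neg_eq_conj, mul_mul_mul_comm, mul_assoc (c * _),
      ← AddChar.map_add_eq_mul, ← AddChar.map_add_eq_mul]
    congr 2
    ring
  simp only [hterm, ← Finset.mul_sum]
  rw [AddChar.sum_mulShift _ (ZMod.isPrimitive_stdAddChar Q), if_neg (sub_ne_zero.mpr h)]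
  simp
end
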